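/- arXiv:2503.02663 — 6 statements merged into one kernel-verified Lean document; each statement's English description precedes it below -/
import Mathlib

section
/- The number of flip-equivalence classes of planar binary trees with exactly n nodes is finite and equals B n; in particular B n is a natural number for every n. -/
/-- Planar binary trees. -/
inductive T : Type where
  | nil : T
  | node : T → T → T

/-- The number of nodes of a planar binary tree. -/
def T.nodes : T → ℕ
  | .nil => 0
  | .node a b => a.nodes + b.nodes + 1

/-- Flip equivalence: the least relation such that `nil ≈ nil` and, whenever `a ≈ c` and
`b ≈ d`, both `node a b ≈ node c d` and `node a b ≈ node d c`. -/
inductive Flip : T → T → Prop where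
  | nil : Flip .nil .nil
  | node {a b c d : T} : Flip a c → Flip b d → Flip (.node a b) (.node c d)
  | swap {a b c d : T} : Flip a c → Flip b d → Flip (.node a b) (.node d c)

/-- The sequence `B` with `B 0 = B 1 = 1` and, for `n ≥ 1`,
`B (2n) = (1/2) · ∑_{k=0}^{2n-1} B (2n-1-k) · B k` and
`B (2n+1) = (1/2) · (∑_{k=0}^{2n} B (2n-k) · B k + B n)`. -/
def B : ℕ → ℚ
  | 0 => 1
  | 1 => 1
  | n + 2 =>
    (1 / 2) * ((∑ k ∈ (Finset.range (n + 2)).attach, B (n + 1 - k.1) * B k.1)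
      + if (n + 2) % 2 = 0 then 0 else B ((n + 1) / 2))
termination_by n => n
decreasing_by
  · omega
  · have := Finset.mem_range.mp k.2; omega
  · omega

/-!
A nonempty flip class is determined by the *unordered* pair of the classes of its two subtrees.
Hence, among the ordered pairs of classes with `n` nodes in total, each class with `n + 1` nodes is
hit twice, except that the classes coming from a diagonal pair are hit once. Diagonal pairs exist
only for even `n`, where there is one for each class with `n / 2` nodes; adding them to the count
makes every class be hit twice, which is the recurrence of `B`.
-/

open Finset

section UnorderedPairs

variable {α ι : Type*} [DecidableEq α]

theorem two_mul_card_image_sym2Mk {s : Finset (α × α)} (hs : ∀ p ∈ s, p.swap ∈ s) :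
    2 * #(s.image Sym2.mk.uncurry) = #s + #{p ∈ s | p.1 = p.2} := by
  have maps_to : ∀ p ∈ s, Sym2.mk.uncurry p ∈ s.image Sym2.mk.uncurry :=
    fun p => mem_image_of_mem _
  rw [card_eq_sum_card_fiberwise maps_to,
    card_eq_sum_card_fiberwise fun p hp => maps_to p (mem_of_mem_filter p hp),
    ← sum_add_distrib, mul_comm, ← smul_eq_mul, ← sum_const]
  refine sum_congr rfl (forall_mem_image.2 ?_)
  rintro ⟨a, b⟩ hab
  have fiber_eq : {p ∈ s | Sym2.mk.uncurry p = s(a, b)} = {(a, b), (b, a)} := by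
    ext ⟨x, y⟩
    simp only [mem_filter, Function.uncurry_apply_pair, Sym2.eq_iff, mem_insert, mem_singleton,
      Prod.mk.injEq, and_iff_right_iff_imp]
    rintro (⟨rfl, rfl⟩ | ⟨rfl, rfl⟩)
    exacts [hab, hs _ hab]
  rw [filter_comm, Function.uncurry_apply_pair, fiber_eq]
  obtain rfl | hne := eq_or_ne a b
  · simp [filter_singleton]
  · simp [filter_insert, filter_singleton, hne, hne.symm]

/-- For a graded set whose elements of degree `i` form `L i`, the ordered pairs of elements of
total degree `n`. -/
def pairsOfDegree [AddMonoid ι] [HasAntidiagonal ι] (L : ι → Finset α) (n : ι) :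
    Finset (α × α) :=
  (antidiagonal n).biUnion fun ij => L ij.1 ×ˢ L ij.2

theorem mem_pairsOfDegree [AddMonoid ι] [HasAntidiagonal ι] {L : ι → Finset α} {n : ι}
    {p : α × α} :
    p ∈ pairsOfDegree L n ↔ ∃ i j, i + j = n ∧ p.1 ∈ L i ∧ p.2 ∈ L j := by
  simp [pairsOfDegree]

theorem swap_mem_pairsOfDegree [AddCommMonoid ι] [HasAntidiagonal ι] {L : ι → Finset α} {n : ι}
    {p : α × α} (hp : p ∈ pairsOfDegree L n) : p.swap ∈ pairsOfDegree L n := by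
  obtain ⟨i, j, hij, hi, hj⟩ := mem_pairsOfDegree.1 hp
  exact mem_pairsOfDegree.2 ⟨j, i, by rwa [add_comm], hj, hi⟩

theorem card_pairsOfDegree [AddMonoid ι] [HasAntidiagonal ι] {L : ι → Finset α}
    (hL : Pairwise (Function.onFun Disjoint L)) (n : ι) :
    #(pairsOfDegree L n) = ∑ ij ∈ antidiagonal n, #(L ij.1) * #(L ij.2) := by
  rw [pairsOfDegree, card_biUnion]
  · simp only [card_product]
  · intro ij _ kl _ hne
    rw [Function.onFun, disjoint_product]
    by_cases h : ij.1 = kl.1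
    · exact .inr (hL fun h' => hne (Prod.ext h h'))
    · exact .inl (hL h)

theorem prodMk_self_mem_pairsOfDegree [AddMonoid ι] [HasAntidiagonal ι] {L : ι → Finset α}
    (hL : Pairwise (Function.onFun Disjoint L)) {n : ι} {a : α} :
    (a, a) ∈ pairsOfDegree L n ↔ ∃ i, i + i = n ∧ a ∈ L i := by
  rw [mem_pairsOfDegree]
  refine ⟨fun ⟨i, j, hij, hi, hj⟩ => ?_, fun ⟨i, hi, ha⟩ => ⟨i, i, hi, ha, ha⟩⟩
  obtain rfl : i = j := hL.eq (not_disjoint_iff.2 ⟨a, hi, hj⟩)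
  exact ⟨i, hij, hi⟩

theorem card_filter_diag_pairsOfDegree {L : ℕ → Finset α}
    (hL : Pairwise (Function.onFun Disjoint L)) (n : ℕ) :
    #{p ∈ pairsOfDegree L n | p.1 = p.2} = if Even n then #(L (n / 2)) else 0 := by
  split_ifs with hn
  · obtain ⟨m, rfl⟩ := hn
    have filter_eq : {p ∈ pairsOfDegree L (m + m) | p.1 = p.2} = (L m).diag := by
      ext ⟨a, b⟩
      rw [mem_filter, mem_diag]
      constructor
      · rintro ⟨hp, rfl : a = b⟩
        obtain ⟨i, hi, ha⟩ := (prodMk_self_mem_pairsOfDegree hL).1 hp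
        obtain rfl : i = m := by omega
        exact ⟨ha, rfl⟩
      · rintro ⟨ha, rfl : a = b⟩
        exact ⟨(prodMk_self_mem_pairsOfDegree hL).2 ⟨m, rfl, ha⟩, rfl⟩
    rw [filter_eq, diag_card, show (m + m) / 2 = m by omega]
  · rw [card_eq_zero, filter_eq_empty_iff]
    rintro ⟨a, b⟩ hp (rfl : a = b)
    obtain ⟨i, rfl, -⟩ := (prodMk_self_mem_pairsOfDegree hL).1 hp
    exact hn ⟨i, rfl⟩

theorem two_mul_card_image_sym2Mk_pairsOfDegree {L : ℕ → Finset α}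
    (hL : Pairwise (Function.onFun Disjoint L)) (n : ℕ) :
    2 * #((pairsOfDegree L n).image Sym2.mk.uncurry) =
      ∑ ij ∈ antidiagonal n, #(L ij.1) * #(L ij.2) + if Even n then #(L (n / 2)) else 0 := by
  rw [two_mul_card_image_sym2Mk fun _ => swap_mem_pairsOfDegree, card_pairsOfDegree hL,
    card_filter_diag_pairsOfDegree hL]

end UnorderedPairs

theorem setOf_setoid_class_eq_image_mk_preimage {α : Type*} (r : Setoid α) (P : Quotient r → Prop) :
    {C : Set α | ∃ a, P (Quotient.mk r a) ∧ C = {b | r b a}} =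
      (fun q => Quotient.mk r ⁻¹' {q}) '' {q | P q} := by
  have preimage_mk (a : α) : Quotient.mk r ⁻¹' {Quotient.mk r a} = {b | r b a} :=
    Set.ext fun _ => Quotient.eq
  ext C
  simp only [Set.mem_image, Set.mem_ofPred_eq, Quotient.exists, preimage_mk, eq_comm]

theorem two_mul_B_succ (n : ℕ) :
    2 * B (n + 1) =
      ∑ ij ∈ antidiagonal n, B ij.1 * B ij.2 + if Even n then B (n / 2) else 0 := by
  cases n with
  | zero => norm_num [B]
  | succ n =>
    have even_succ_iff : Even (n + 1) ↔ ¬(n + 2) % 2 = 0 := by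
      rw [Nat.even_iff]
      omega
    rw [B, Finset.sum_attach (range (n + 2)) fun k => B (n + 1 - k) * B k,
      Nat.sum_antidiagonal_eq_sum_range_succ fun i j => B i * B j]
    simp only [even_succ_iff, ite_not, mul_comm (B (n + 1 - _))]
    ring

namespace Flip

theorem refl (t : T) : Flip t t := by
  induction t with
  | nil => exact .nil
  | node a b iha ihb => exact .node iha ihb

theorem symm {s t : T} (h : Flip s t) : Flip t s := by
  induction h with
  | nil => exact .nil
  | node _ _ iha ihb => exact .node iha ihb
  | swap _ _ iha ihb => exact .swap ihb iha

theorem trans {s t u : T} (hst : Flip s t) (htu : Flip t u) : Flip s u := by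
  induction hst generalizing u with
  | nil => exact htu
  | node _ _ iha ihb =>
    cases htu with
    | node hc hd => exact .node (iha hc) (ihb hd)
    | swap hc hd => exact .swap (iha hc) (ihb hd)
  | swap _ _ iha ihb =>
    cases htu with
    | node hd hc => exact .swap (iha hc) (ihb hd)
    | swap hd hc => exact .node (iha hc) (ihb hd)

theorem nodes_eq {s t : T} (h : Flip s t) : s.nodes = t.nodes := by
  induction h with
  | nil => rfl
  | node _ _ iha ihb => rw [T.nodes, T.nodes, iha, ihb]
  | swap _ _ iha ihb => rw [T.nodes, T.nodes, iha, ihb, Nat.add_comm (T.nodes _)]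

/-- Flip equivalence as a setoid on planar binary trees. -/
def setoid : Setoid T := ⟨Flip, refl, symm, trans⟩

end Flip

/-- Planar binary trees up to flip equivalence. -/
abbrev FlipClass : Type := Quotient Flip.setoid

namespace FlipClass

/-- The class of the empty tree. -/
def nil : FlipClass := Quotient.mk _ T.nil

/-- Grafting two classes at a new root. The argument is an unordered pair because swapping the two
subtrees does not change the class. -/
def node : Sym2 FlipClass → FlipClass :=
  Sym2.lift ⟨Quotient.map₂ T.node fun _ _ ha _ _ hb => Flip.node ha hb, by
    rintro ⟨a⟩ ⟨b⟩
    exact Quotient.sound (Flip.swap (Flip.refl a) (Flip.refl b))⟩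

/-- The number of nodes of any tree in the class. -/
def nodes : FlipClass → ℕ :=
  Quotient.lift T.nodes fun _ _ => Flip.nodes_eq

theorem nodes_nil : nil.nodes = 0 := rfl

theorem nodes_node (a b : FlipClass) : (node s(a, b)).nodes = a.nodes + b.nodes + 1 := by
  induction a, b using Quotient.inductionOn₂
  rfl

theorem node_injective : Function.Injective node := by
  rintro ⟨⟨a⟩, ⟨b⟩⟩ ⟨⟨c⟩, ⟨d⟩⟩ h
  have hflip : Flip (.node a b) (.node c d) := Quotient.exact h
  refine Sym2.eq_iff.2 ?_
  cases hflip with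
  | node hac hbd => exact .inl ⟨Quotient.sound hac, Quotient.sound hbd⟩
  | swap had hbc => exact .inr ⟨Quotient.sound had, Quotient.sound hbc⟩

theorem eq_nil_or_eq_node (q : FlipClass) : q = nil ∨ ∃ a b, q = node s(a, b) := by
  obtain ⟨_ | ⟨a, b⟩⟩ := q
  · exact .inl rfl
  · exact .inr ⟨Quotient.mk _ a, Quotient.mk _ b, rfl⟩

theorem finite_setOf_nodes_lt (n : ℕ) : {q : FlipClass | q.nodes < n}.Finite := by
  induction n with
  | zero => simp
  | succ n ih =>
    refine ((ih.image2 (fun a b => node s(a, b)) ih).insert nil).subset fun q hq => ?_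
    obtain rfl | ⟨a, b, rfl⟩ := q.eq_nil_or_eq_node
    · exact .inl rfl
    · rw [Set.mem_ofPred_eq, nodes_node] at hq
      exact .inr ⟨a, Set.mem_ofPred.2 (by omega), b, Set.mem_ofPred.2 (by omega), rfl⟩

theorem finite_setOf_nodes_eq (n : ℕ) : {q : FlipClass | q.nodes = n}.Finite :=
  (finite_setOf_nodes_lt (n + 1)).subset fun _ hq => Nat.lt_succ_of_le (le_of_eq hq)

/-- The finset of flip classes with exactly `n` nodes. -/
noncomputable def withNodes (n : ℕ) : Finset FlipClass :=
  (finite_setOf_nodes_eq n).toFinset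

theorem coe_withNodes (n : ℕ) : (withNodes n : Set FlipClass) = {q | q.nodes = n} :=
  Set.Finite.coe_toFinset _

theorem mem_withNodes {n : ℕ} {q : FlipClass} : q ∈ withNodes n ↔ q.nodes = n :=
  Set.Finite.mem_toFinset _

theorem pairwise_disjoint_withNodes : Pairwise (Function.onFun Disjoint withNodes) := by
  refine fun m n hmn => disjoint_left.2 fun q hm hn => hmn ?_
  rw [← mem_withNodes.1 hm, mem_withNodes.1 hn]

theorem withNodes_zero : withNodes 0 = {nil} := by
  ext q
  rw [mem_withNodes, mem_singleton]
  refine ⟨fun hq => ?_, fun hq => hq ▸ nodes_nil⟩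
  obtain rfl | ⟨a, b, rfl⟩ := q.eq_nil_or_eq_node
  · rfl
  · simp [nodes_node] at hq

open scoped Classical in
theorem withNodes_succ (n : ℕ) :
    withNodes (n + 1) = ((pairsOfDegree withNodes n).image Sym2.mk.uncurry).image node := by
  ext q
  simp only [mem_withNodes, image_image, mem_image, mem_pairsOfDegree, Prod.exists,
    Function.comp_apply, Function.uncurry_apply_pair]
  constructor
  · intro hq
    obtain rfl | ⟨a, b, rfl⟩ := q.eq_nil_or_eq_node
    · simp [nodes_nil] at hq
    · exact ⟨a, b, ⟨_, _, Nat.succ_injective ((nodes_node a b).symm.trans hq), rfl, rfl⟩, rfl⟩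
  · rintro ⟨a, b, ⟨_, _, rfl, rfl, rfl⟩, rfl⟩
    exact nodes_node a b

theorem two_mul_card_withNodes_succ (n : ℕ) :
    2 * #(withNodes (n + 1)) =
      ∑ ij ∈ antidiagonal n, #(withNodes ij.1) * #(withNodes ij.2) +
        if Even n then #(withNodes (n / 2)) else 0 := by
  classical
  rw [withNodes_succ, card_image_of_injective _ node_injective,
    two_mul_card_image_sym2Mk_pairsOfDegree pairwise_disjoint_withNodes]

theorem card_withNodes (n : ℕ) : (#(withNodes n) : ℚ) = B n := by
  induction n using Nat.strong_induction_on with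
  | _ n ih =>
    cases n with
    | zero => simp [withNodes_zero, B]
    | succ n =>
      refine mul_left_cancel₀ (two_ne_zero' ℚ) ?_
      calc (2 * #(withNodes (n + 1)) : ℚ)
        _ = ∑ ij ∈ antidiagonal n, (#(withNodes ij.1) * #(withNodes ij.2) : ℚ) +
              if Even n then (#(withNodes (n / 2)) : ℚ) else 0 := by
          exact_mod_cast two_mul_card_withNodes_succ n
        _ = ∑ ij ∈ antidiagonal n, B ij.1 * B ij.2 + if Even n then B (n / 2) else 0 := by
          rw [ih (n / 2) (by omega)]
          refine congrArg (· + _) (sum_congr rfl fun ij hij => ?_)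
          rw [HasAntidiagonal.mem_antidiagonal] at hij
          rw [ih ij.1 (by omega), ih ij.2 (by omega)]
        _ = 2 * B (n + 1) := (two_mul_B_succ n).symm

end FlipClass

/-- The number of flip-equivalence classes of planar binary trees with exactly `n` nodes is
finite and equals `B n`; in particular `B n` is a natural number. -/
theorem flip_classes_card (n : ℕ) :
    {C : Set T | ∃ t : T, t.nodes = n ∧ C = {s : T | Flip s t}}.Finite ∧
    ({C : Set T | ∃ t : T, t.nodes = n ∧ C = {s : T | Flip s t}}.ncard : ℚ) = B n := by
  have classes_eq : {C : Set T | ∃ t : T, t.nodes = n ∧ C = {s : T | Flip s t}} =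
      (fun q => Quotient.mk Flip.setoid ⁻¹' {q}) '' (FlipClass.withNodes n : Set FlipClass) := by
    rw [FlipClass.coe_withNodes]
    exact setOf_setoid_class_eq_image_mk_preimage Flip.setoid (FlipClass.nodes · = n)
  have preimage_injective : Function.Injective fun q => Quotient.mk Flip.setoid ⁻¹' {q} :=
    Quotient.mk_surjective.preimage_injective.comp Set.singleton_injective
  rw [classes_eq, Set.ncard_image_of_injective _ preimage_injective, Set.ncard_coe_finset]
  exact ⟨(finite_toSet _).image _, FlipClass.card_withNodes n⟩
end

section
/- In the formal power series ring ℚ⟦s⟧, the series H = Σ_{k≥0} B(2k)·s^k and I = Σ_{k≥0} B(2k+1)·s^k satisfy H = 1 + s·I·H. -/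
/-!
The recurrence makes `B (2 (m + 1))` half the sum of `B i * B j` over `i + j = 2 m + 1`. Exactly one
of `i` and `j` is odd, so exchanging them pairs the terms with `i` odd with those with `j` odd.
The factor `1 / 2` therefore leaves only the products of an odd-indexed by an even-indexed value,
whose sum is the coefficient of `s ^ m` in `I * H`.
-/

section Parity

open Finset

variable {M : Type*} [AddCommMonoid M]

theorem sum_antidiagonal_two_mul_add_one (f : ℕ × ℕ → M) (m : ℕ) :
    ∑ p ∈ antidiagonal (2 * m + 1), f p =
      ∑ p ∈ antidiagonal m, f (2 * p.1 + 1, 2 * p.2) +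
        ∑ p ∈ antidiagonal m, f (2 * p.1, 2 * p.2 + 1) := by
  induction m generalizing f with
  | zero => simp [Nat.sum_antidiagonal_succ, add_comm]
  | succ m ih =>
    rw [show 2 * (m + 1) + 1 = 2 * m + 1 + 1 + 1 by ring]
    simp only [Nat.sum_antidiagonal_succ, ih fun p => f (p.1 + 1 + 1, p.2), mul_add, mul_one,
      mul_zero, zero_add]
    abel

theorem sum_antidiagonal_two_mul_add_one_of_swap (f : ℕ × ℕ → M) (hf : ∀ p, f p.swap = f p)
    (m : ℕ) :
    ∑ p ∈ antidiagonal (2 * m + 1), f p =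
      2 • ∑ p ∈ antidiagonal m, f (2 * p.1 + 1, 2 * p.2) := by
  have swap_parity : ∑ p ∈ antidiagonal m, f (2 * p.1, 2 * p.2 + 1) =
      ∑ p ∈ antidiagonal m, f (2 * p.1 + 1, 2 * p.2) := by
    rw [← Nat.sum_antidiagonal_swap]
    exact sum_congr rfl fun p _ => hf (2 * p.1 + 1, 2 * p.2)
  rw [sum_antidiagonal_two_mul_add_one, swap_parity, two_nsmul]

theorem B_two_mul_succ (m : ℕ) :
    B (2 * (m + 1)) = 1 / 2 * ∑ p ∈ antidiagonal (2 * m + 1), B p.1 * B p.2 := by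
  rw [mul_add_one, B, if_pos (by lia), add_zero,
    sum_attach (range (2 * m + 2)) fun k => B (2 * m + 1 - k) * B k,
    ← Nat.sum_antidiagonal_swap, Nat.sum_antidiagonal_eq_sum_range_succ_mk]
  rfl

theorem B_two_mul_succ_eq_sum_odd_mul_even (m : ℕ) :
    B (2 * (m + 1)) = ∑ p ∈ antidiagonal m, B (2 * p.1 + 1) * B (2 * p.2) := by
  rw [B_two_mul_succ,
    sum_antidiagonal_two_mul_add_one_of_swap (fun p => B p.1 * B p.2) fun _ => mul_comm _ _,
    nsmul_eq_mul]
  ring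

end Parity

/-- In `ℚ⟦s⟧`, the series `H = ∑ B (2k) · s^k` and `I = ∑ B (2k+1) · s^k` satisfy
`H = 1 + s·I·H`. -/
theorem H_functional_equation :
    PowerSeries.mk (fun k => B (2 * k)) =
      1 + PowerSeries.X * PowerSeries.mk (fun k => B (2 * k + 1)) *
        PowerSeries.mk (fun k => B (2 * k)) := by
  ext n
  rw [mul_assoc, map_add, PowerSeries.coeff_mk]
  cases n with
  | zero => simp [B]
  | succ m =>
    rw [PowerSeries.coeff_succ_X_mul, PowerSeries.coeff_mul, B_two_mul_succ_eq_sum_odd_mul_even]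
    simp [PowerSeries.coeff_one]
end

section
/- In the formal power series ring ℚ⟦s⟧, the series G = Σ_{n≥0} B n · s^n, H = Σ_{k≥0} B(2k)·s^k and I = Σ_{k≥0} B(2k+1)·s^k satisfy 2·I = G + s·I² + H². -/
/-!
The `2n`-th coefficient of `G²` is `∑_{k=0}^{2n} B (2n-k) · B k`, so the recurrence at odd indices,
which also holds for `n = 0`, says that `2·I = G + E`, where `E` is the series of even-indexed
coefficients of `G²`. Writing `G = H(s²) + s·I(s²)`, the even part of `G²` is
`H(s²)² + s²·I(s²)²`, so `E = H² + s·I²`.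
-/

section Bisection

open Finset PowerSeries

theorem sum_antidiagonal_two_mul_succ {M : Type*} [AddCommMonoid M] (n : ℕ) (f : ℕ × ℕ → M) :
    ∑ p ∈ antidiagonal (2 * (n + 1)), f p =
      ∑ p ∈ antidiagonal (n + 1), f (2 * p.1, 2 * p.2) +
        ∑ p ∈ antidiagonal n, f (2 * p.1 + 1, 2 * p.2 + 1) := by
  induction n generalizing f with
  | zero => simp [Nat.sum_antidiagonal_succ, add_left_comm, add_comm]
  | succ n ih =>
    calc ∑ p ∈ antidiagonal (2 * (n + 1) + 1 + 1), f p
      _ = f (0, 2 * (n + 2)) + (f (1, 2 * (n + 1) + 1) +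
            ∑ p ∈ antidiagonal (2 * (n + 1)), f (p.1 + 2, p.2)) := by
          rw [Nat.sum_antidiagonal_succ, Nat.sum_antidiagonal_succ]
          rfl
      _ = f (0, 2 * (n + 2)) + ∑ p ∈ antidiagonal (n + 1), f (2 * (p.1 + 1), 2 * p.2) +
            (f (1, 2 * (n + 1) + 1) +
              ∑ p ∈ antidiagonal n, f (2 * (p.1 + 1) + 1, 2 * p.2 + 1)) := by
          rw [ih fun p ↦ f (p.1 + 2, p.2), add_left_comm (f (1, _)), ← add_assoc]
          rfl
      _ = ∑ p ∈ antidiagonal (n + 2), f (2 * p.1, 2 * p.2) +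
            ∑ p ∈ antidiagonal (n + 1), f (2 * p.1 + 1, 2 * p.2 + 1) := by
          rw [Nat.sum_antidiagonal_succ (f := fun p ↦ f (2 * p.1, 2 * p.2)),
            Nat.sum_antidiagonal_succ (f := fun p ↦ f (2 * p.1 + 1, 2 * p.2 + 1))]
          rfl

variable {R : Type*} [Semiring R]

/-- The series `∑ a (2n) · Xⁿ` of even-indexed coefficients of `φ = ∑ a n · Xⁿ`, reindexed so that
`φ(X) = evenBisection φ (X²) + X · oddBisection φ (X²)`. -/
noncomputable def evenBisection (φ : R⟦X⟧) : R⟦X⟧ := mk fun n ↦ coeff (2 * n) φ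

/-- The series `∑ a (2n+1) · Xⁿ` of odd-indexed coefficients of `φ = ∑ a n · Xⁿ`, the companion of
`evenBisection`. -/
noncomputable def oddBisection (φ : R⟦X⟧) : R⟦X⟧ := mk fun n ↦ coeff (2 * n + 1) φ

theorem evenBisection_mul (φ ψ : R⟦X⟧) :
    evenBisection (φ * ψ) =
      evenBisection φ * evenBisection ψ + X * (oddBisection φ * oddBisection ψ) := by
  ext n
  cases n with
  | zero => simp [evenBisection, coeff_mul]
  | succ n =>
    rw [map_add, coeff_succ_X_mul]
    simp only [evenBisection, oddBisection, coeff_mul, coeff_mk, sum_antidiagonal_two_mul_succ]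

end Bisection

section Recurrence

open Finset PowerSeries

theorem two_mul_B_two_mul_add_one (n : ℕ) :
    2 * B (2 * n + 1) = B n + ∑ p ∈ antidiagonal (2 * n), B p.1 * B p.2 := by
  cases n with
  | zero => norm_num [B]
  | succ m =>
    have not_even : ¬(2 * m + 1 + 2) % 2 = 0 := by omega
    have half : (2 * m + 1 + 1) / 2 = m + 1 := by omega
    have convolution : ∑ k ∈ (range (2 * m + 1 + 2)).attach, B (2 * m + 1 + 1 - k) * B k =
        ∑ p ∈ antidiagonal (2 * (m + 1)), B p.1 * B p.2 := by
      rw [sum_attach _ fun k ↦ B (2 * m + 1 + 1 - k) * B k,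
        ← Nat.sum_antidiagonal_eq_sum_range_succ fun i j ↦ B j * B i]
      exact sum_congr rfl fun p _ ↦ mul_comm (B p.2) (B p.1)
    rw [show 2 * (m + 1) + 1 = 2 * m + 1 + 2 by ring, B, convolution, if_neg not_even, half]
    ring

theorem two_mul_oddBisection_mk_B :
    2 * oddBisection (mk B) = mk B + evenBisection (mk B * mk B) := by
  ext n
  rw [two_mul, map_add, ← two_mul]
  simpa [oddBisection, evenBisection, coeff_mul] using two_mul_B_two_mul_add_one n

end Recurrence

/-- In `ℚ⟦s⟧`, the series `G = ∑ B n · sⁿ`, `H = ∑ B (2k) · s^k` and `I = ∑ B (2k+1) · s^k`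
satisfy `2·I = G + s·I² + H²`. -/
theorem I_functional_equation :
    2 * PowerSeries.mk (fun k => B (2 * k + 1)) =
      PowerSeries.mk B + PowerSeries.X * (PowerSeries.mk (fun k => B (2 * k + 1))) ^ 2 +
        (PowerSeries.mk (fun k => B (2 * k))) ^ 2 := by
  have even_part : evenBisection (PowerSeries.mk B) = PowerSeries.mk fun k => B (2 * k) := by
    simp only [evenBisection, PowerSeries.coeff_mk]
  have odd_part : oddBisection (PowerSeries.mk B) = PowerSeries.mk fun k => B (2 * k + 1) := by
    simp only [oddBisection, PowerSeries.coeff_mk]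
  rw [← even_part, ← odd_part, two_mul_oddBisection_mk_B, evenBisection_mul]
  ring
end

section
/- For every natural number n, Σ_{k=0}^{n} K(n,k) = B n. -/
open Classical in
/-- The array `K n ℓ`: base cases (taking precedence) `K n 0 = 1` if `n = 2^r - 1` and `0`
otherwise; `K s t = 0` for `t ≥ s > 0`; `K s (s-1) = 1` for `s > 1`; otherwise
`K (2n) ℓ = (1/2) · ∑_{k=0}^{2n-1} ∑_{v=0}^{ℓ-1} K k v · K (2n-1-k) (ℓ-1-v)`,
`K (2n+1) (2ℓ) = K n ℓ + (1/2) · ∑_{k=0}^{2n} ∑_{v=0}^{2ℓ-1} K k v · K (2n-k) (2ℓ-1-v)` and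
`K (2n+1) (2ℓ+1) = (1/2) · (-K n ℓ + ∑_{k=0}^{2n} ∑_{v=0}^{2ℓ} K k v · K (2n-k) (2ℓ-v))`. -/
noncomputable def K : ℕ → ℕ → ℚ
  | n, l =>
    if l = 0 then (if ∃ r : ℕ, n = 2 ^ r - 1 then 1 else 0)
    else if 0 < n ∧ n ≤ l then 0
    else if 1 < n ∧ l = n - 1 then 1
    else if h : n % 2 = 0 then
      (1 / 2) * ∑ k ∈ (Finset.range n).attach, ∑ v ∈ Finset.range l,
        K k.1 v * K (n - 1 - k.1) (l - 1 - v)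
    else if l % 2 = 0 then
      K (n / 2) (l / 2) + (1 / 2) * ∑ k ∈ (Finset.range n).attach, ∑ v ∈ Finset.range l,
        K k.1 v * K (n - 1 - k.1) (l - 1 - v)
    else
      (1 / 2) * (- K (n / 2) (l / 2) + ∑ k ∈ (Finset.range n).attach, ∑ v ∈ Finset.range l,
        K k.1 v * K (n - 1 - k.1) (l - 1 - v))
termination_by n l => n
decreasing_by
  · have := Finset.mem_range.mp k.2; omega
  · have := Finset.mem_range.mp k.2; omega
  · omega
  · have := Finset.mem_range.mp k.2; omega
  · have := Finset.mem_range.mp k.2; omega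
  · omega
  · have := Finset.mem_range.mp k.2; omega
  · have := Finset.mem_range.mp k.2; omega

/-!
Let `P n = ∑ l, K n l * X ^ l`. The recurrences for `K` say that
`P (2m) = X/2 * ∑ P i * P j` over `i + j = 2m - 1` (for `m > 0`) and
`P (2m+1) = X/2 * ∑ P i * P j + (1 - X/2) * P m (X ^ 2)` over `i + j = 2m`.
The prescribed boundary values do not disturb these identities: `P 0 = 1` and, for `n > 0`, `P n`
is monic of degree `n - 1`, so in the convolution `∑ P i * P j` over `i + j = n` the two extreme
products contribute `2 * P n` while all the others have lower degree. At `X = 1` the identities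
become the recurrences for `B`.
-/

open Finset Polynomial

theorem sum_attach_range_succ_eq_sum_antidiagonal {M : Type*} [AddCommMonoid M]
    (f : ℕ → ℕ → M) (n : ℕ) :
    ∑ k ∈ (range (n + 1)).attach, f k.1 (n - k.1) = ∑ p ∈ antidiagonal n, f p.1 p.2 := by
  rw [sum_attach (range (n + 1)) fun k => f k (n - k), Nat.sum_antidiagonal_eq_sum_range_succ]

theorem B_even_recurrence (m : ℕ) :
    B (2 * m + 2) = 1 / 2 * ∑ p ∈ antidiagonal (2 * m + 1), B p.1 * B p.2 := by
  rw [B, if_pos (by omega), add_zero,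
    sum_attach_range_succ_eq_sum_antidiagonal fun i j => B j * B i]
  simp only [mul_comm]

theorem B_odd_recurrence (m : ℕ) :
    B (2 * m + 1) = 1 / 2 * (∑ p ∈ antidiagonal (2 * m), B p.1 * B p.2 + B m) := by
  cases m with
  | zero => norm_num [B]
  | succ m =>
    rw [Nat.mul_add_one, B, if_neg (by omega),
      sum_attach_range_succ_eq_sum_antidiagonal fun i j => B j * B i,
      show (2 * m + 1 + 1) / 2 = m + 1 by omega]
    simp only [mul_comm]

theorem K_even_zero (m : ℕ) : K (2 * m + 2) 0 = 0 := by
  rw [K, if_pos rfl, if_neg]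
  rintro ⟨_ | r, hr⟩ <;> grind

theorem K_odd_zero (m : ℕ) : K (2 * m + 1) 0 = K m 0 := by
  have exists_pow_iff : (∃ r, 2 * m + 1 = 2 ^ r - 1) ↔ ∃ r, m = 2 ^ r - 1 := by
    constructor
    · rintro ⟨_ | r, hr⟩
      · simp at hr
      · exact ⟨r, by grind⟩
    · rintro ⟨r, rfl⟩
      exact ⟨r + 1, by have := Nat.two_pow_pos r; grind⟩
  rw [K, if_pos rfl, K, if_pos rfl]
  classical
  exact if_congr exists_pow_iff rfl rfl

theorem K_zero_zero : K 0 0 = 1 := by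
  rw [K, if_pos rfl, if_pos ⟨0, rfl⟩]

theorem K_succ_self (n : ℕ) : K (n + 1) n = 1 := by
  cases n with
  | zero => exact (K_odd_zero 0).trans K_zero_zero
  | succ n => rw [K, if_neg (by omega), if_neg (by omega), if_pos (by omega)]

theorem K_eq_zero_of_le {n l : ℕ} (hl : 0 < l) (h : n ≤ l) : K n l = 0 := by
  rw [K, if_neg hl.ne']
  rcases n.eq_zero_or_pos with rfl | hn
  · simp
  · rw [if_pos ⟨hn, h⟩]

/-- The generating polynomial `∑ l, K n l * X ^ l` of the `n`-th row of `K`. Row `0` has an entry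
in column `0`, so the summation range is `l ≤ n` although `K n n = 0` for `n > 0`. -/
noncomputable def rowPoly (n : ℕ) : ℚ[X] :=
  ∑ l ∈ range (n + 1), monomial l (K n l)

theorem coeff_rowPoly (n l : ℕ) : (rowPoly n).coeff l = K n l := by
  simp only [rowPoly, finsetSum_coeff, coeff_monomial, sum_ite_eq', mem_range, ite_eq_left_iff]
  intro h
  exact (K_eq_zero_of_le (by omega) (by omega)).symm

theorem eval_one_rowPoly (n : ℕ) : (rowPoly n).eval 1 = ∑ l ∈ range (n + 1), K n l := by
  simp [rowPoly, eval_finsetSum]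

theorem natDegree_rowPoly_le (n : ℕ) : (rowPoly n).natDegree ≤ n - 1 := by
  rw [natDegree_le_iff_coeff_eq_zero]
  intro l hl
  rw [coeff_rowPoly, K_eq_zero_of_le (by omega) (by omega)]

theorem rowPoly_zero : rowPoly 0 = 1 := by
  simp [rowPoly, K_zero_zero]

theorem rowPoly_one : rowPoly 1 = 1 := by
  rw [eq_C_of_natDegree_le_zero (natDegree_rowPoly_le 1), coeff_rowPoly, K_succ_self, C_1]

/-- The convolution `∑ rowPoly i * rowPoly j` over `i + j = n`, whose coefficients are the double
sums in the recurrences for row `n + 1` of `K`. -/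
noncomputable def rowConv (n : ℕ) : ℚ[X] :=
  ∑ p ∈ antidiagonal n, rowPoly p.1 * rowPoly p.2

theorem sum_attach_K_mul_K_eq_coeff_rowConv (n l : ℕ) :
    ∑ k ∈ (range (n + 1)).attach, ∑ v ∈ range (l + 1), K k.1 v * K (n - k.1) (l - v) =
      (rowConv n).coeff l := by
  rw [sum_attach_range_succ_eq_sum_antidiagonal fun i j =>
    ∑ v ∈ range (l + 1), K i v * K j (l - v)]
  simp only [rowConv, finsetSum_coeff, coeff_mul, coeff_rowPoly,
    Nat.sum_antidiagonal_eq_sum_range_succ_mk]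

theorem rowConv_one : rowConv 1 = 2 * rowPoly 1 := by
  rw [rowConv, Nat.sum_antidiagonal_succ, Nat.antidiagonal_zero, sum_singleton, rowPoly_zero]
  ring

theorem rowConv_add_two (n : ℕ) :
    rowConv (n + 2) =
      2 * rowPoly (n + 2) + ∑ p ∈ antidiagonal n, rowPoly (p.1 + 1) * rowPoly (p.2 + 1) := by
  rw [rowConv, Nat.sum_antidiagonal_succ, Nat.sum_antidiagonal_succ', rowPoly_zero]
  ring

theorem natDegree_sum_rowPoly_succ_mul_rowPoly_succ_le (n : ℕ) :
    (∑ p ∈ antidiagonal n, rowPoly (p.1 + 1) * rowPoly (p.2 + 1)).natDegree ≤ n := by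
  refine natDegree_sum_le_of_forall_le _ _ fun p hp => ?_
  rw [← mem_antidiagonal.mp hp]
  exact natDegree_mul_le_of_le (natDegree_rowPoly_le _) (natDegree_rowPoly_le _)

theorem coeff_rowConv_of_le {n l : ℕ} (h : n ≤ l) :
    (rowConv (n + 1)).coeff l = 2 * K (n + 1) l := by
  cases n with
  | zero => rw [rowConv_one, coeff_ofNat_mul, coeff_rowPoly]
  | succ n =>
    rw [rowConv_add_two, coeff_add, coeff_ofNat_mul, coeff_rowPoly,
      coeff_eq_zero_of_natDegree_lt
        ((natDegree_sum_rowPoly_succ_mul_rowPoly_succ_le n).trans_lt h), add_zero]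

theorem K_add_two_of_le {n l : ℕ} (h : n ≤ l) :
    K (n + 2) (l + 1) = 1 / 2 * (rowConv (n + 1)).coeff l := by
  rw [coeff_rowConv_of_le h]
  rcases h.eq_or_lt with rfl | h
  · norm_num [K_succ_self]
  · rw [K_eq_zero_of_le (by omega) (by omega), K_eq_zero_of_le (by omega) (by omega)]
    norm_num

theorem K_even_succ (m l : ℕ) :
    K (2 * m + 2) (l + 1) = 1 / 2 * (rowConv (2 * m + 1)).coeff l := by
  rcases le_or_gt (2 * m) l with h | h
  · exact K_add_two_of_le h
  · rw [K, if_neg (by omega), if_neg (by omega), if_neg (by omega), dif_pos (by omega)]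
    exact congrArg (1 / 2 * ·) (sum_attach_K_mul_K_eq_coeff_rowConv (2 * m + 1) l)

theorem K_odd_even_succ {m : ℕ} (hm : 0 < m) (i : ℕ) :
    K (2 * m + 1) (2 * i + 2) = K m (i + 1) + 1 / 2 * (rowConv (2 * m)).coeff (2 * i + 1) := by
  rcases le_or_gt m (i + 1) with h | h
  · obtain ⟨m, rfl⟩ := Nat.exists_eq_add_one.mpr hm
    rw [K_eq_zero_of_le i.succ_pos h, zero_add]
    exact K_add_two_of_le (n := 2 * m + 1) (by omega)
  · rw [K, if_neg (by omega), if_neg (by omega), if_neg (by omega), dif_neg (by omega),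
      if_pos (by omega), show (2 * m + 1) / 2 = m by omega,
      show (2 * i + 2) / 2 = i + 1 by omega]
    exact congrArg (K m (i + 1) + 1 / 2 * ·)
      (sum_attach_K_mul_K_eq_coeff_rowConv (2 * m) (2 * i + 1))

theorem K_odd_odd {m : ℕ} (hm : 0 < m) (i : ℕ) :
    K (2 * m + 1) (2 * i + 1) = 1 / 2 * (-K m i + (rowConv (2 * m)).coeff (2 * i)) := by
  rcases le_or_gt m i with h | h
  · obtain ⟨m, rfl⟩ := Nat.exists_eq_add_one.mpr hm
    rw [K_eq_zero_of_le (by omega) h, neg_zero, zero_add]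
    exact K_add_two_of_le (n := 2 * m + 1) (by omega)
  · rw [K, if_neg (by omega), if_neg (by omega), if_neg (by omega), dif_neg (by omega),
      if_neg (by omega), show (2 * m + 1) / 2 = m by omega, show (2 * i + 1) / 2 = i by omega]
    exact congrArg (1 / 2 * (-K m i + ·))
      (sum_attach_K_mul_K_eq_coeff_rowConv (2 * m) (2 * i))

theorem rowPoly_even (m : ℕ) :
    rowPoly (2 * m + 2) = C (1 / 2) * X * rowConv (2 * m + 1) := by
  ext (_ | l)
  · simp [mul_assoc, coeff_rowPoly, K_even_zero]
  · rw [mul_assoc, coeff_C_mul, coeff_X_mul, coeff_rowPoly, K_even_succ]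

theorem rowPoly_odd (m : ℕ) :
    rowPoly (2 * m + 1) =
      C (1 / 2) * X * rowConv (2 * m) + (1 - C (1 / 2) * X) * expand ℚ 2 (rowPoly m) := by
  rcases m.eq_zero_or_pos with rfl | hm
  · simp [rowConv, rowPoly_zero, rowPoly_one]
  ext (_ | l)
  · simp [sub_mul, mul_assoc, coeff_rowPoly, coeff_expand, K_odd_zero]
  rw [sub_mul, one_mul, mul_assoc, mul_assoc, coeff_add, coeff_sub, coeff_C_mul, coeff_C_mul,
    coeff_X_mul, coeff_X_mul, coeff_rowPoly, coeff_expand two_pos, coeff_expand two_pos,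
    coeff_rowPoly, coeff_rowPoly]
  obtain ⟨i, rfl | rfl⟩ := l.even_or_odd'
  · rw [K_odd_odd hm, if_neg (by omega), if_pos (by omega), Nat.mul_div_cancel_left i two_pos]
    ring
  · rw [K_odd_even_succ hm, if_pos (by omega), if_neg (by omega),
      show (2 * i + 1 + 1) / 2 = i + 1 by omega]
    ring

/-- For every natural number `n`, `∑_{k=0}^{n} K n k = B n`. -/
theorem sum_K_eq_B (n : ℕ) : ∑ k ∈ Finset.range (n + 1), K n k = B n := by
  rw [← eval_one_rowPoly]
  induction n using Nat.strong_induction_on with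
  | _ n ih =>
  have eval_rowConv {k : ℕ} (hk : k < n) :
      (rowConv k).eval 1 = ∑ p ∈ antidiagonal k, B p.1 * B p.2 := by
    rw [rowConv, eval_finsetSum]
    refine sum_congr rfl fun p hp => ?_
    have hp : p.1 + p.2 = k := mem_antidiagonal.mp hp
    rw [eval_mul, ih p.1 (by omega), ih p.2 (by omega)]
  obtain ⟨m, rfl | rfl⟩ := n.even_or_odd'
  · cases m with
    | zero => simp [rowPoly_zero, B]
    | succ m => simp [mul_add_one, rowPoly_even, B_even_recurrence, eval_rowConv]
  · simp only [rowPoly_odd, B_odd_recurrence, eval_add, eval_mul, eval_sub, eval_one, eval_C,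
      eval_X, expand_eval, one_pow]
    rw [ih m (by omega), eval_rowConv (by omega)]
    ring
end

section
/- In the bivariate formal power series ring ℚ⟦x,y⟧, the parity-split series of B₂ satisfy Q(x,y) − R(x,y) = (y − 1)·(P₀(x,y)·P₁(x,y) + x·Q(x,y)·R(x,y)). -/
/-- The array `B2 n k` of 2-colored non-isomorphic binary tree counts: base cases
`B2 0 0 = B2 1 0 = B2 1 1 = 1`, `B2 0 k = 0` for `k > 0`, `B2 1 k = 0` for `k > 1`,
`B2 n 0 = B n` for `n > 1`, `B2 n k = 0` for `k > n`; and for `k > 0` the recurrences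
`B2 (2n) k = (1/2) · ∑_{r=0}^{1} ∑_{ℓ=0}^{2n-1} ∑_{m=0}^{k-r} B2 ℓ m · B2 (2n-1-ℓ) (k-r-m)`,
`B2 (2n+1) (2k) = (1/2) · (∑_{r=0}^{1} ∑_{ℓ=0}^{2n} ∑_{m=0}^{2k-r} B2 ℓ m · B2 (2n-ℓ) (2k-r-m) + B2 n k)`
and similarly
`B2 (2n+1) (2k+1) = (1/2) · (∑_{r=0}^{1} ∑_{ℓ=0}^{2n} ∑_{m=0}^{2k+r} B2 ℓ m · B2 (2n-ℓ) (2k+r-m) + B2 n k)`. -/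
def B2 : ℕ → ℕ → ℚ
  | 0, k => if k = 0 then 1 else 0
  | 1, k => if k ≤ 1 then 1 else 0
  | n + 2, k =>
    if k = 0 then B (n + 2)
    else if n + 2 < k then 0
    else
      (1 / 2) * ((∑ r ∈ Finset.range 2, ∑ l ∈ (Finset.range (n + 2)).attach,
          ∑ m ∈ Finset.range (k - r + 1), B2 l.1 m * B2 (n + 1 - l.1) (k - r - m))
        + if (n + 2) % 2 = 0 then 0 else B2 ((n + 1) / 2) (k / 2))
termination_by n k => n
decreasing_by
  · have := Finset.mem_range.mp l.2; omega
  · omega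
  · omega

/-- The bivariate generating function `M(x,y) = ∑_{n,k} B2 n k · xⁿ y^k`. -/
noncomputable def M : MvPowerSeries (Fin 2) ℚ :=
  fun d => B2 (d 0) (d 1)

/-- `P₀(x,y) = ∑_{n≥0} ∑_k B2 (2n) (2k) · xⁿ y^k`. -/
noncomputable def P0 : MvPowerSeries (Fin 2) ℚ :=
  fun d => B2 (2 * d 0) (2 * d 1)

/-- `P₁(x,y) = ∑_{n≥1} ∑_k B2 (2n) (2k+1) · xⁿ y^k`. -/
noncomputable def P1 : MvPowerSeries (Fin 2) ℚ :=
  fun d => if 1 ≤ d 0 then B2 (2 * d 0) (2 * d 1 + 1) else 0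

/-- `Q(x,y) = ∑_{n≥0} ∑_k B2 (2n+1) (2k) · xⁿ y^k`. -/
noncomputable def Q : MvPowerSeries (Fin 2) ℚ :=
  fun d => B2 (2 * d 0 + 1) (2 * d 1)

/-- `R(x,y) = ∑_{n≥0} ∑_k B2 (2n+1) (2k+1) · xⁿ y^k`. -/
noncomputable def R : MvPowerSeries (Fin 2) ℚ :=
  fun d => B2 (2 * d 0 + 1) (2 * d 1 + 1)

/-!
The recurrences for `B2` amount to `M = 1 + ½ x (1 + y) (M² + M(x², y²))`. Write `E(x², y²)` and
`y O(x², y²)` for the parts of `M²` that are even in `x` and, respectively, even and odd in `y`.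
Comparing the terms of the functional equation that are odd in `x` gives `Q = ½ (E + y O + M)` and
`R = ½ (E + O + M)`, so `Q - R = ½ (y - 1) O`. Squaring
`M = P₀(x², y²) + y P₁(x², y²) + x Q(x², y²) + x y R(x², y²)` shows `O = 2 (P₀ P₁ + x Q R)`.
-/

section Multisection

open MvPowerSeries

variable {σ A : Type*} {p : ℕ}

/-- The exponent of the monomial `∏ i, X i ^ e i`, for a vector `e` of residues modulo `p`. -/
noncomputable def residueExponent [Finite σ] (e : σ → Fin p) : σ →₀ ℕ :=
  Finsupp.equivFunOnFinite.symm fun i => e i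

/-- The multisection of a power series with residues `e` modulo `p`: it keeps the terms whose
exponents are congruent to `e`, and reindexes the exponent `p • d + e` as `d`. -/
noncomputable def multisection [Finite σ] [Semiring A] (e : σ → Fin p) (f : MvPowerSeries σ A) :
    MvPowerSeries σ A :=
  fun d => coeff (p • d + residueExponent e) f

/-- The power series `∑ e, X ^ e * f e (X ^ p)` whose multisections modulo `p` are the `f e`. -/
noncomputable def interleave [Fintype σ] [DecidableEq σ] [CommRing A] (hp : p ≠ 0)
    (f : (σ → Fin p) → MvPowerSeries σ A) : MvPowerSeries σ A :=
  ∑ e, (∏ i, X i ^ (e i : ℕ)) * expand p hp (f e)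

theorem coeff_multisection [Finite σ] [Semiring A] (e : σ → Fin p) (f : MvPowerSeries σ A)
    (d : σ →₀ ℕ) : coeff d (multisection e f) = coeff (p • d + residueExponent e) f :=
  rfl

theorem prod_X_pow_eq_monomial_residueExponent [Fintype σ] [CommSemiring A] (e : σ → Fin p) :
    ∏ i, (X i : MvPowerSeries σ A) ^ (e i : ℕ) = monomial (residueExponent e) 1 := by
  rw [monomial_eq', map_one, one_mul, Finsupp.prod_fintype _ _ fun _ => pow_zero _]
  rfl

theorem coeff_monomial_residueExponent_mul_expand [Finite σ] [CommRing A] (hp : p ≠ 0)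
    (a e : σ → Fin p) [Decidable (a = e)] (f : MvPowerSeries σ A) (d : σ →₀ ℕ) :
    coeff (p • d + residueExponent e) (monomial (residueExponent a) 1 * expand p hp f) =
      if a = e then coeff d f else 0 := by
  split_ifs with h
  · rw [h, add_comm, coeff_add_monomial_mul, one_mul, coeff_expand_smul]
  rw [coeff_monomial_mul, one_mul]
  refine ite_eq_right_iff.mpr fun hle => ?_
  obtain ⟨i, hi⟩ := Function.ne_iff.mp h
  refine coeff_expand_of_not_dvd p hp f (i := i) fun hdvd => hi ?_
  have hmod : (a i : ℕ) ≡ p * d i + e i [MOD p] := (Nat.modEq_iff_dvd' (hle i)).mpr hdvd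
  have hmod' : (a i : ℕ) ≡ e i [MOD p] := by simpa [Nat.ModEq] using hmod
  exact Fin.ext (hmod'.eq_of_lt_of_lt (a i).isLt (e i).isLt)

theorem multisection_interleave [Fintype σ] [DecidableEq σ] [CommRing A] (hp : p ≠ 0)
    (f : (σ → Fin p) → MvPowerSeries σ A) (e : σ → Fin p) :
    multisection e (interleave hp f) = f e := by
  ext d
  simp only [coeff_multisection, interleave, prod_X_pow_eq_monomial_residueExponent, map_sum,
    coeff_monomial_residueExponent_mul_expand, Finset.sum_ite_eq', Finset.mem_univ, if_true]

theorem exists_eq_smul_add_residueExponent [Finite σ] (hp : p ≠ 0) (d : σ →₀ ℕ) :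
    ∃ (m : σ →₀ ℕ) (e : σ → Fin p), d = p • m + residueExponent e :=
  ⟨d.mapRange (· / p) (Nat.zero_div p), fun i => ⟨d i % p, Nat.mod_lt _ (Nat.pos_of_ne_zero hp)⟩,
    Finsupp.ext fun i => (Nat.div_add_mod (d i) p).symm⟩

theorem interleave_multisection [Fintype σ] [DecidableEq σ] [CommRing A] (hp : p ≠ 0)
    (f : MvPowerSeries σ A) : interleave hp (fun e => multisection e f) = f := by
  ext d
  obtain ⟨m, e, rfl⟩ := exists_eq_smul_add_residueExponent hp d
  rw [← coeff_multisection, multisection_interleave, coeff_multisection]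

/-- The parity class `(i, j)` of a bivariate power series: the coefficient of `x ^ n * y ^ k` is
that of `x ^ (2 * n + i) * y ^ (2 * k + j)` in `f`. -/
noncomputable def bisection [Semiring A] (i j : Fin 2) (f : MvPowerSeries (Fin 2) A) :
    MvPowerSeries (Fin 2) A :=
  multisection ![i, j] f

/-- The bivariate power series `a(x², y²) + y b(x², y²) + x c(x², y²) + x y d(x², y²)`, whose
bisections are `a`, `b`, `c`, `d`. -/
noncomputable def interleaveTwo [CommRing A] (a b c d : MvPowerSeries (Fin 2) A) :
    MvPowerSeries (Fin 2) A :=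
  expand 2 two_ne_zero a + X 1 * expand 2 two_ne_zero b + X 0 * expand 2 two_ne_zero c +
    X 0 * X 1 * expand 2 two_ne_zero d

theorem interleave_two_ne_zero [CommRing A] (f : (Fin 2 → Fin 2) → MvPowerSeries (Fin 2) A) :
    interleave two_ne_zero f = interleaveTwo (f ![0, 0]) (f ![0, 1]) (f ![1, 0]) (f ![1, 1]) := by
  rw [interleave, ← (finTwoArrowEquiv (Fin 2)).symm.sum_comp, Fintype.sum_prod_type]
  simp [interleaveTwo, Fin.sum_univ_two, add_assoc]

theorem interleaveTwo_bisection [CommRing A] (f : MvPowerSeries (Fin 2) A) :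
    interleaveTwo (bisection 0 0 f) (bisection 0 1 f) (bisection 1 0 f) (bisection 1 1 f) = f := by
  simp only [bisection]
  rw [← interleave_two_ne_zero fun e => multisection e f, interleave_multisection]

theorem bisection_interleaveTwo [CommRing A] (a b c d : MvPowerSeries (Fin 2) A) (i j : Fin 2) :
    bisection i j (interleaveTwo a b c d) = !![a, b; c, d] i j := by
  have h := multisection_interleave two_ne_zero (fun e => !![a, b; c, d] (e 0) (e 1)) ![i, j]
  rw [interleave_two_ne_zero] at h
  exact h

theorem interleaveTwo_mul_interleaveTwo [CommRing A]
    (a b c d a' b' c' d' : MvPowerSeries (Fin 2) A) :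
    interleaveTwo a b c d * interleaveTwo a' b' c' d' =
      interleaveTwo (a * a' + X 1 * (b * b') + X 0 * (c * c') + X 0 * X 1 * (d * d'))
        (a * b' + b * a' + X 0 * (c * d' + d * c'))
        (a * c' + c * a' + X 1 * (b * d' + d * b'))
        (a * d' + d * a' + b * c' + c * b') := by
  simp only [interleaveTwo, map_add, map_mul, expand_X]
  ring

theorem bisection_zero_one_mul [CommRing A] (f g : MvPowerSeries (Fin 2) A) :
    bisection 0 1 (f * g) =
      bisection 0 0 f * bisection 0 1 g + bisection 0 1 f * bisection 0 0 g +
        X 0 * (bisection 1 0 f * bisection 1 1 g + bisection 1 1 f * bisection 1 0 g) := by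
  conv_lhs => rw [← interleaveTwo_bisection f, ← interleaveTwo_bisection g,
    interleaveTwo_mul_interleaveTwo, bisection_interleaveTwo]
  rfl

end Multisection

section Bidegree

open MvPowerSeries Finset.HasAntidiagonal

variable {A : Type*}

/-- The exponent of the monomial `x ^ n * y ^ k` in the variables `x = X 0`, `y = X 1`. -/
noncomputable def bidegree (n k : ℕ) : Fin 2 →₀ ℕ :=
  Finsupp.single 0 n + Finsupp.single 1 k

@[simp]
theorem bidegree_apply_zero (n k : ℕ) : bidegree n k 0 = n := by
  simp [bidegree]

@[simp]
theorem bidegree_apply_one (n k : ℕ) : bidegree n k 1 = k := by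
  simp [bidegree]

theorem bidegree_apply_self (d : Fin 2 →₀ ℕ) : bidegree (d 0) (d 1) = d := by
  ext i
  fin_cases i <;> simp

theorem bidegree_add (n k n' k' : ℕ) :
    bidegree (n + n') (k + k') = bidegree n k + bidegree n' k' := by
  ext i
  fin_cases i <;> simp

theorem bidegree_succ_left (n k : ℕ) :
    bidegree (n + 1) k = Finsupp.single 0 1 + bidegree n k := by
  rw [bidegree, bidegree, Finsupp.single_add, add_assoc, add_left_comm]

theorem bidegree_succ_right (n k : ℕ) :
    bidegree n (k + 1) = Finsupp.single 1 1 + bidegree n k := by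
  rw [bidegree, bidegree, Finsupp.single_add, add_comm (Finsupp.single 1 k), add_left_comm]

theorem coeff_X_mul_of_apply_eq_zero {σ : Type*} [CommSemiring A] {s : σ} {d : σ →₀ ℕ}
    (h : d s = 0) (f : MvPowerSeries σ A) : coeff d (X s * f) = 0 :=
  X_dvd_iff.mp (dvd_mul_right (X s) f) d h

theorem coeff_bidegree_succ_left_X_zero_mul [Semiring A] (n k : ℕ) (f : MvPowerSeries (Fin 2) A) :
    coeff (bidegree (n + 1) k) (X 0 * f) = coeff (bidegree n k) f := by
  rw [bidegree_succ_left, X, coeff_add_monomial_mul, one_mul]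

theorem coeff_bidegree_succ_right_X_one_mul [Semiring A] (n k : ℕ) (f : MvPowerSeries (Fin 2) A) :
    coeff (bidegree n (k + 1)) (X 1 * f) = coeff (bidegree n k) f := by
  rw [bidegree_succ_right, X, coeff_add_monomial_mul, one_mul]

theorem sum_antidiagonal_bidegree [AddCommMonoid A] (n k : ℕ)
    (F : (Fin 2 →₀ ℕ) × (Fin 2 →₀ ℕ) → A) :
    ∑ a ∈ antidiagonal (bidegree n k), F a =
      ∑ b ∈ antidiagonal n ×ˢ antidiagonal k,
        F (bidegree b.1.1 b.2.1, bidegree b.1.2 b.2.2) := by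
  refine Finset.sum_nbij' (fun a => ((a.1 0, a.2 0), (a.1 1, a.2 1)))
    (fun b => (bidegree b.1.1 b.2.1, bidegree b.1.2 b.2.2)) ?_ ?_ ?_ ?_ ?_
  · intro a ha
    have h := DFunLike.congr_fun (mem_antidiagonal.mp ha)
    simpa using And.intro (h 0) (h 1)
  · intro b hb
    obtain ⟨hn, hk⟩ : b.1.1 + b.1.2 = n ∧ b.2.1 + b.2.2 = k := by simpa using hb
    rw [mem_antidiagonal, ← bidegree_add, hn, hk]
  · exact fun a _ => Prod.ext (bidegree_apply_self a.1) (bidegree_apply_self a.2)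
  · intro b _
    simp
  · intro a _
    simp only [bidegree_apply_self]

theorem coeff_bidegree_mul [Semiring A] (n k : ℕ) (f g : MvPowerSeries (Fin 2) A) :
    coeff (bidegree n k) (f * g) = ∑ l ∈ Finset.range (n + 1), ∑ m ∈ Finset.range (k + 1),
      coeff (bidegree l m) f * coeff (bidegree (n - l) (k - m)) g := by
  simp only [coeff_mul, sum_antidiagonal_bidegree, Finset.sum_product,
    Finset.Nat.sum_antidiagonal_eq_sum_range_succ_mk]

theorem coeff_bidegree_expand [CommRing A] {p : ℕ} (hp : p ≠ 0) (n k : ℕ)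
    (f : MvPowerSeries (Fin 2) A) :
    coeff (bidegree n k) (expand p hp f) =
      if p ∣ n ∧ p ∣ k then coeff (bidegree (n / p) (k / p)) f else 0 := by
  split_ifs with h
  · obtain ⟨⟨a, rfl⟩, b, rfl⟩ := h
    have bidegree_mul : bidegree (p * a) (p * b) = p • bidegree a b := by
      simp [bidegree, smul_add]
    rw [bidegree_mul, coeff_expand_smul, Nat.mul_div_cancel_left _ (Nat.pos_of_ne_zero hp),
      Nat.mul_div_cancel_left _ (Nat.pos_of_ne_zero hp)]
  · rcases not_and_or.mp h with hn | hk
    · exact coeff_expand_of_not_dvd p hp f (i := 0) (by rwa [bidegree_apply_zero])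
    · exact coeff_expand_of_not_dvd p hp f (i := 1) (by rwa [bidegree_apply_one])

end Bidegree

section BivariateTreeSeries

open MvPowerSeries

theorem coeff_bidegree_M (n k : ℕ) : coeff (bidegree n k) M = B2 n k := by
  rw [coeff_apply, M, bidegree_apply_zero, bidegree_apply_one]

theorem B2_zero_right (n : ℕ) : B2 n 0 = B n := by
  match n with
  | 0 => simp [B2, B]
  | 1 => simp [B2, B]
  | n + 2 => rw [B2, if_pos rfl]

theorem B2_eq_zero_of_lt {n k : ℕ} (h : n < k) : B2 n k = 0 := by
  match n with
  | 0 => rw [B2, if_neg (by omega)]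
  | 1 => rw [B2, if_neg (by omega)]
  | n + 2 => rw [B2, if_neg (by omega), if_pos h]

theorem coeff_bidegree_M_mul_M (n k : ℕ) :
    coeff (bidegree n k) (M * M) = ∑ l ∈ Finset.range (n + 1), ∑ m ∈ Finset.range (k + 1),
      B2 l m * B2 (n - l) (k - m) := by
  simp only [coeff_bidegree_mul, coeff_bidegree_M]

theorem coeff_bidegree_M_mul_M_eq_zero_of_lt {n k : ℕ} (h : n < k) :
    coeff (bidegree n k) (M * M) = 0 := by
  rw [coeff_bidegree_M_mul_M]
  refine Finset.sum_eq_zero fun l hl => Finset.sum_eq_zero fun m hm => ?_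
  rw [Finset.mem_range] at hl hm
  by_cases hlm : l < m
  · rw [B2_eq_zero_of_lt hlm, zero_mul]
  · rw [B2_eq_zero_of_lt (n := n - l) (by omega), mul_zero]

theorem B2_succ_zero (n : ℕ) :
    B2 (n + 1) 0 =
      (1 / 2) * (coeff (bidegree n 0) (M * M) + if Even n then B2 (n / 2) 0 else 0) := by
  rw [coeff_bidegree_M_mul_M]
  match n with
  | 0 => norm_num [B2]
  | n + 1 =>
    rw [B2_zero_right, B2_zero_right, B,
      Finset.sum_attach (Finset.range (n + 2)) (fun l => B (n + 1 - l) * B l)]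
    simp [B2_zero_right, mul_comm, Nat.even_add_one, ← Nat.even_iff, -Nat.not_even_iff_odd]

theorem B2_succ_succ (n k : ℕ) :
    B2 (n + 1) (k + 1) =
      (1 / 2) * (coeff (bidegree n (k + 1)) (M * M) + coeff (bidegree n k) (M * M) +
        if Even n then B2 (n / 2) ((k + 1) / 2) else 0) := by
  rcases lt_or_ge n k with hlt | hle
  · rw [B2_eq_zero_of_lt (by omega), coeff_bidegree_M_mul_M_eq_zero_of_lt (by omega),
      coeff_bidegree_M_mul_M_eq_zero_of_lt hlt, B2_eq_zero_of_lt (by omega)]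
    simp
  rw [coeff_bidegree_M_mul_M, coeff_bidegree_M_mul_M]
  match n with
  | 0 =>
    obtain rfl : k = 0 := by omega
    norm_num [B2, Finset.sum_range_succ]
  | n + 1 =>
    rw [B2, if_neg (by omega), if_neg (by omega), Finset.sum_range_succ, Finset.sum_range_one,
      Finset.sum_attach (Finset.range (n + 2)) (fun l => ∑ m ∈ Finset.range (k + 1 - 0 + 1),
        B2 l m * B2 (n + 1 - l) (k + 1 - 0 - m)),
      Finset.sum_attach (Finset.range (n + 2)) (fun l => ∑ m ∈ Finset.range (k + 1 - 1 + 1),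
        B2 l m * B2 (n + 1 - l) (k + 1 - 1 - m))]
    simp [Nat.even_add_one, ← Nat.even_iff, -Nat.not_even_iff_odd]

theorem coeff_bidegree_zero_left_M (k : ℕ) :
    coeff (bidegree 0 k) M = coeff (bidegree 0 k) 1 := by
  rw [coeff_bidegree_M, B2, coeff_one]
  congr 1
  simp [Finsupp.ext_iff]

theorem coeff_bidegree_expand_two_M (n k : ℕ) :
    coeff (bidegree n k) (expand 2 two_ne_zero M) =
      if Even n ∧ Even k then B2 (n / 2) (k / 2) else 0 := by
  simp only [coeff_bidegree_expand, coeff_bidegree_M, even_iff_two_dvd]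

theorem coeff_bidegree_expand_two_M_add (n k : ℕ) :
    coeff (bidegree n (k + 1)) (expand 2 two_ne_zero M) +
        coeff (bidegree n k) (expand 2 two_ne_zero M) =
      if Even n then B2 (n / 2) ((k + 1) / 2) else 0 := by
  rw [coeff_bidegree_expand_two_M, coeff_bidegree_expand_two_M]
  rcases Nat.even_or_odd' k with ⟨j, rfl | rfl⟩
  · simp [show (2 * j + 1) / 2 = j by omega]
  · simp [Nat.even_add_one]

theorem M_eq_one_add :
    M = 1 + C (1 / 2) * (X 0 * ((1 + X 1) * (M * M + expand 2 two_ne_zero M))) := by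
  ext d
  rw [← bidegree_apply_self d, map_add, coeff_C_mul, one_add_mul]
  rcases d 0 with _ | n
  · rw [coeff_X_mul_of_apply_eq_zero (bidegree_apply_zero 0 _), mul_zero, add_zero,
      coeff_bidegree_zero_left_M]
  have coeff_one_eq_zero : coeff (bidegree (n + 1) (d 1)) (1 : MvPowerSeries (Fin 2) ℚ) = 0 := by
    rw [coeff_one, if_neg]
    exact fun h => by simpa using DFunLike.congr_fun h 0
  rw [coeff_one_eq_zero, zero_add, coeff_bidegree_succ_left_X_zero_mul, coeff_bidegree_M, map_add,
    map_add]
  rcases d 1 with _ | k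
  · rw [coeff_X_mul_of_apply_eq_zero (bidegree_apply_one n 0), B2_succ_zero,
      coeff_bidegree_expand_two_M]
    simp only [Even.zero, and_true, Nat.zero_div, add_zero]
  · rw [coeff_bidegree_succ_right_X_one_mul, map_add, B2_succ_succ,
      ← coeff_bidegree_expand_two_M_add]
    ring

theorem coeff_bisection_M (i j : Fin 2) (d : Fin 2 →₀ ℕ) :
    coeff d (bisection i j M) = B2 (2 * d 0 + i) (2 * d 1 + j) :=
  rfl

theorem bisection_zero_zero_M : bisection 0 0 M = P0 :=
  rfl

theorem bisection_zero_one_M : bisection 0 1 M = P1 := by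
  ext d
  rw [coeff_bisection_M, coeff_apply, P1]
  split_ifs with h
  · rfl
  · exact B2_eq_zero_of_lt (by rw [Fin.val_zero, Fin.val_one]; omega)

theorem bisection_one_zero_M : bisection 1 0 M = Q :=
  rfl

theorem bisection_one_one_M : bisection 1 1 M = R :=
  rfl

theorem bisection_zero_one_M_mul_M :
    bisection 0 1 (M * M) = 2 * (P0 * P1 + X 0 * Q * R) := by
  rw [bisection_zero_one_mul, bisection_zero_zero_M, bisection_zero_one_M,
    bisection_one_zero_M, bisection_one_one_M]
  ring

theorem M_eq_interleaveTwo :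
    M = interleaveTwo
      (1 + C (1 / 2) * (X 0 * (bisection 1 0 (M * M) + X 1 * bisection 1 1 (M * M))))
      (C (1 / 2) * (X 0 * (bisection 1 0 (M * M) + bisection 1 1 (M * M))))
      (C (1 / 2) * (bisection 0 0 (M * M) + X 1 * bisection 0 1 (M * M) + M))
      (C (1 / 2) * (bisection 0 0 (M * M) + bisection 0 1 (M * M) + M)) := by
  conv_lhs => rw [M_eq_one_add, ← interleaveTwo_bisection (M * M)]
  simp only [interleaveTwo, map_add, map_mul, map_one, expand_C, expand_X]
  ring

theorem Q_eq_half_mul :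
    Q = C (1 / 2) * (bisection 0 0 (M * M) + X 1 * bisection 0 1 (M * M) + M) :=
  (congrArg (bisection 1 0) M_eq_interleaveTwo).trans (bisection_interleaveTwo _ _ _ _ 1 0)

theorem R_eq_half_mul : R = C (1 / 2) * (bisection 0 0 (M * M) + bisection 0 1 (M * M) + M) :=
  (congrArg (bisection 1 1) M_eq_interleaveTwo).trans (bisection_interleaveTwo _ _ _ _ 1 1)

end BivariateTreeSeries

/-- In `ℚ⟦x,y⟧`, `Q(x,y) − R(x,y) = (y − 1)·(P₀(x,y)·P₁(x,y) + x·Q(x,y)·R(x,y))`. -/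
theorem Q_sub_R_eq :
    Q - R = (MvPowerSeries.X 1 - 1) * (P0 * P1 + MvPowerSeries.X 0 * Q * R) := by
  have half_mul_two : (MvPowerSeries.C (1 / 2) * 2 : MvPowerSeries (Fin 2) ℚ) = 1 := by
    rw [← map_ofNat (MvPowerSeries.C (σ := Fin 2) (R := ℚ)) 2, ← map_mul]
    norm_num
  calc Q - R = MvPowerSeries.C (1 / 2) *
        ((MvPowerSeries.X 1 - 1) * bisection 0 1 (M * M)) := by
        conv_lhs => rw [Q_eq_half_mul, R_eq_half_mul]
        ring
    _ = MvPowerSeries.C (1 / 2) * 2 *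
        ((MvPowerSeries.X 1 - 1) * (P0 * P1 + MvPowerSeries.X 0 * Q * R)) := by
        rw [bisection_zero_one_M_mul_M]
        ring
    _ = _ := by rw [half_mul_two, one_mul]
end

section
/- For all natural numbers n and c, Σ_{ℓ=0}^{n} K₃(n,ℓ,c) = B₂(n,c). -/
open Classical in
/-- The array `K3 n ℓ c`: base cases (taking precedence) `K3 0 0 0 = 1`; `K3 n ℓ c = 0`
whenever `ℓ ≥ n > 0` or `c > n`; `K3 n (n-1) c = C(n,c)` for `n ≥ 1` and `0 ≤ c ≤ n`;
`K3 n 0 c = 1` if `n = 2^r - 1` for some `r ≥ 1` and `0 ≤ c ≤ n`, and `K3 n 0 c = 0` for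
other `n ≥ 1`; otherwise, for `p, q, r ∈ {0,1}`,
`K3 (2n+p) (2ℓ+q) (2c+r) = p·(-1/2)^q·K3 n ℓ c + (1/2) · ∑_{δ=0, δ≤2c+r}^{1} ∑_{k=0}^{2n+p-1}
∑_{v=0}^{2ℓ+q-1} ∑_{m=0}^{2c+r-δ} K3 k v m · K3 (2n+p-1-k) (2ℓ+q-1-v) (2c+r-δ-m)`. -/
noncomputable def K3 : ℕ → ℕ → ℕ → ℚ
  | 0, l, c => if l = 0 ∧ c = 0 then 1 else 0
  | n + 1, l, c =>
    if n + 1 ≤ l ∨ n + 1 < c then 0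
    else if l = n then ((n + 1).choose c : ℚ)
    else if l = 0 then (if ∃ r : ℕ, 1 ≤ r ∧ n + 1 = 2 ^ r - 1 then 1 else 0)
    else
      (if (n + 1) % 2 = 1 then ((-1 : ℚ) / 2) ^ (l % 2) * K3 ((n + 1) / 2) (l / 2) (c / 2)
        else 0)
      + (1 / 2) * ∑ δ ∈ Finset.range 2, if δ ≤ c then
          (∑ k ∈ (Finset.range (n + 1)).attach, ∑ v ∈ Finset.range l,
            ∑ m ∈ Finset.range (c - δ + 1),
              K3 k.1 v m * K3 (n - k.1) (l - 1 - v) (c - δ - m)) else 0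
termination_by n l c => n
decreasing_by
  · omega
  · have := Finset.mem_range.mp k.2; omega
  · omega

/-!
Let the polynomial `treePoly n = ∑ K3 n ℓ c X ^ c Y ^ ℓ` collect row `n` of `K3`. The recurrence
for `K3` says that `treePoly (n + 1)` is
`(1 + X) * ([n even] (1 - Y/2) * treePoly (n/2) (X², Y²) + Y/2 * ∑ treePoly i * treePoly j)`,
the sum being over `i + j = n`; the base cases of `K3` are consequences of this identity and of
`treePoly 0 = 1`. Setting `Y = 1` turns `1 - Y/2` into `1/2`, and the identity into the recurrence
for the row polynomials of `B2`.
-/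

open Polynomial Finset
open scoped Polynomial.Bivariate

section PolynomialCoefficients

variable {R : Type*} [CommSemiring R]

theorem coeff_one_add_X_mul (p : R[X]) (c : ℕ) :
    ((1 + X) * p).coeff c = ∑ δ ∈ range 2, if δ ≤ c then p.coeff (c - δ) else 0 := by
  cases c <;> simp [add_mul, sum_range_succ]

theorem coeff_one_add_C_mul_X_mul_expand_two (a : R) (p : R[X]) (n : ℕ) :
    ((1 + C a * X) * expand R 2 p).coeff n = a ^ (n % 2) * p.coeff (n / 2) := by
  rw [add_mul, one_mul, mul_assoc, coeff_add, coeff_C_mul]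
  obtain ⟨k, rfl | rfl⟩ := n.even_or_odd'
  · cases k with
    | zero => simp [coeff_expand]
    | succ k =>
      have hodd : ¬ 2 ∣ 2 * k + 1 := by omega
      simp [mul_add, coeff_expand, coeff_X_mul, hodd]
  · have hodd : ¬ 2 ∣ 2 * k + 1 := by omega
    have hmod : (2 * k + 1) % 2 = 1 := by omega
    have hdiv : (2 * k + 1) / 2 = k := by omega
    simp [coeff_expand, hodd, hmod, hdiv]

theorem coeff_one_add_X_mul_expand_two (p : R[X]) (n : ℕ) :
    ((1 + X) * expand R 2 p).coeff n = p.coeff (n / 2) := by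
  simpa using coeff_one_add_C_mul_X_mul_expand_two 1 p n

theorem one_add_X_mul_expand_two_geom_sum (n : ℕ) :
    (1 + X) * expand R 2 (∑ i ∈ range n, X ^ i) = ∑ i ∈ range (2 * n), X ^ i := by
  induction n with
  | zero => simp
  | succ n ih =>
    rw [sum_range_succ, map_add, mul_add, ih, mul_add_one, sum_range_succ, sum_range_succ]
    simp only [map_pow, expand_X]
    ring

end PolynomialCoefficients

/-- The row polynomial `∑ K3 n ℓ c X ^ c Y ^ ℓ`, defined by the recurrence of `K3` without any of
its base cases except `n = 0`; see `K3_eq_coeff_coeff_treePoly`. -/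
noncomputable def treePoly : ℕ → ℚ[X][Y]
  | 0 => 1
  | n + 1 =>
    C (1 + X) *
      ((if Even n then
          (1 + C (C (-1 / 2)) * Y) * expand ℚ[X] 2 ((treePoly (n / 2)).map (expand ℚ 2))
        else 0)
      + C (C (1 / 2)) * (Y * ∑ ij ∈ (antidiagonal n).attach,
          treePoly ij.1.1 * treePoly ij.1.2))
termination_by n => n
decreasing_by
  · omega
  · have := HasAntidiagonal.mem_antidiagonal.mp ij.2; omega
  · have := HasAntidiagonal.mem_antidiagonal.mp ij.2; omega

section TreePoly

@[simp]
theorem treePoly_zero : treePoly 0 = 1 := by rw [treePoly]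

theorem treePoly_succ (n : ℕ) :
    treePoly (n + 1) = C (1 + X) *
      ((if Even n then
          (1 + C (C (-1 / 2)) * Y) * expand ℚ[X] 2 ((treePoly (n / 2)).map (expand ℚ 2))
        else 0)
      + C (C (1 / 2)) * (Y * ∑ ij ∈ antidiagonal n, treePoly ij.1 * treePoly ij.2)) := by
  rw [treePoly, sum_attach (antidiagonal n) fun ij ↦ treePoly ij.1 * treePoly ij.2]

theorem coeff_treePoly_succ (n l : ℕ) :
    (treePoly (n + 1)).coeff l = (1 + X) *
      ((if Even n then
          C ((-1 / 2) ^ (l % 2)) * expand ℚ 2 ((treePoly (n / 2)).coeff (l / 2))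
        else 0)
      + C (1 / 2) * (Y * ∑ ij ∈ antidiagonal n, treePoly ij.1 * treePoly ij.2).coeff l) := by
  rw [treePoly_succ, coeff_C_mul, coeff_add, coeff_C_mul]
  split_ifs
  · rw [coeff_one_add_C_mul_X_mul_expand_two, coeff_map, C_pow]
    rfl
  · rw [coeff_zero]

theorem treePoly_one : treePoly 1 = C (1 + X) := by
  have hcancel : (1 + C (C (-1 / 2)) * Y + C (C (1 / 2)) * Y : ℚ[X][Y]) = 1 := by
    rw [add_assoc, ← add_mul, ← C_add, ← C_add]
    norm_num
  rw [treePoly_succ, if_pos Even.zero, Nat.antidiagonal_zero, sum_singleton, treePoly_zero,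
    Polynomial.map_one, map_one, mul_one, mul_one, mul_one, hcancel, mul_one]

theorem natDegree_treePoly_le (n : ℕ) : (treePoly n).natDegree ≤ n - 1 := by
  induction n using Nat.strong_induction_on with
  | _ n ih =>
    match n with
    | 0 => simp
    | 1 => simp only [treePoly_one, natDegree_C, le_refl]
    | n + 2 =>
      rw [treePoly_succ]
      refine (natDegree_C_mul_le _ _).trans (natDegree_add_le_of_degree_le ?_ ?_)
      · split_ifs with hn
        · have hfactor : (1 + C (C (-1 / 2)) * Y : ℚ[X][Y]).natDegree ≤ 1 := by compute_degree
          have hhalf : ((treePoly ((n + 1) / 2)).map (expand ℚ 2 : ℚ[X] →+* ℚ[X])).natDegree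
              ≤ (n + 1) / 2 - 1 :=
            natDegree_map_le.trans (ih _ (by omega))
          refine natDegree_mul_le.trans ?_
          rw [natDegree_expand]
          rw [Nat.even_iff] at hn
          omega
        · simp
      · have hsum : (∑ ij ∈ antidiagonal (n + 1), treePoly ij.1 * treePoly ij.2).natDegree ≤ n := by
          refine natDegree_sum_le_of_forall_le _ _ fun ij hij ↦ ?_
          rw [HasAntidiagonal.mem_antidiagonal] at hij
          exact (natDegree_mul_le_of_le (ih _ (by omega)) (ih _ (by omega))).trans (by omega)
        have hmul := natDegree_mul_le_of_le (natDegree_X_le (R := ℚ[X])) hsum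
        exact (natDegree_C_mul_le _ _).trans (hmul.trans (by omega))

theorem coeff_treePoly_eq_zero {n l : ℕ} (hn : 0 < n) (hl : n ≤ l) : (treePoly n).coeff l = 0 :=
  coeff_eq_zero_of_natDegree_lt ((natDegree_treePoly_le n).trans_lt (by omega))

/-- Only the two products with a factor `treePoly 0 = 1` have degree as large as `n`. -/
theorem coeff_sum_treePoly_mul_treePoly (n : ℕ) :
    (∑ ij ∈ antidiagonal (n + 1), treePoly ij.1 * treePoly ij.2).coeff n
      = 2 * (treePoly (n + 1)).coeff n := by
  rw [finsetSum_coeff, sum_eq_add (0, n + 1) (n + 1, 0) (by simp)]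
  · simp only [treePoly_zero, one_mul, mul_one]
    ring
  · rintro ⟨i, j⟩ hij ⟨hi, hj⟩
    rw [HasAntidiagonal.mem_antidiagonal] at hij
    simp only [ne_eq, Prod.mk.injEq] at hij hi hj
    exact coeff_eq_zero_of_natDegree_lt ((natDegree_mul_le_of_le (natDegree_treePoly_le i)
      (natDegree_treePoly_le j)).trans_lt (by omega))
  · simp
  · simp

theorem coeff_treePoly_succ_self (n : ℕ) : (treePoly (n + 1)).coeff n = (1 + X) ^ (n + 1) := by
  induction n with
  | zero => simp [treePoly_one]
  | succ n ih =>
    have hhalf (hn : Even (n + 1)) : (treePoly ((n + 1) / 2)).coeff ((n + 1) / 2) = 0 := by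
      obtain ⟨k, hk⟩ := hn
      exact coeff_treePoly_eq_zero (by omega) le_rfl
    have htwo : (C (1 / 2) * 2 : ℚ[X]) = 1 := by
      rw [← C_ofNat, ← C_mul]
      norm_num
    rw [coeff_treePoly_succ, coeff_X_mul, coeff_sum_treePoly_mul_treePoly, ih, ← mul_assoc, htwo,
      one_mul, pow_succ' _ (n + 1)]
    split_ifs with hn
    · rw [hhalf hn, map_zero, mul_zero, zero_add]
    · rw [zero_add]

open Classical in
theorem coeff_zero_treePoly (n : ℕ) :
    (treePoly n).coeff 0 = if ∃ r, n + 1 = 2 ^ r then ∑ i ∈ range (n + 1), X ^ i else 0 := by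
  induction n using Nat.strong_induction_on with
  | _ n ih =>
    cases n with
    | zero =>
      have hpow : ∃ r, 0 + 1 = 2 ^ r := ⟨0, rfl⟩
      simp [if_pos hpow]
    | succ n =>
      have hrec : (treePoly (n + 1)).coeff 0
          = if Even n then (1 + X) * expand ℚ 2 ((treePoly (n / 2)).coeff 0) else 0 := by
        simp [coeff_treePoly_succ]
      rw [hrec]
      obtain ⟨k, rfl | rfl⟩ := n.even_or_odd'
      · have hpow : (∃ r, 2 * k + 1 + 1 = 2 ^ r) ↔ ∃ r, k + 1 = 2 ^ r := by
          constructor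
          · rintro ⟨_ | r, hr⟩
            · omega
            · exact ⟨r, by omega⟩
          · rintro ⟨r, hr⟩
            exact ⟨r + 1, by omega⟩
        have hk : 2 * k / 2 = k := by omega
        rw [if_pos (even_two_mul k), hk, ih k (by omega), if_congr hpow rfl rfl]
        split_ifs
        · exact one_add_X_mul_expand_two_geom_sum (k + 1)
        · simp
      · have hpow : ¬ ∃ r, 2 * k + 1 + 1 + 1 = 2 ^ r := by
          rintro ⟨_ | r, hr⟩ <;> omega
        rw [if_neg (Nat.not_even_two_mul_add_one k), if_neg hpow]

open Classical in
theorem coeff_coeff_zero_treePoly {n c : ℕ} (hn : 0 < n) (hc : c ≤ n) :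
    ((treePoly n).coeff 0).coeff c = if ∃ r, 1 ≤ r ∧ n = 2 ^ r - 1 then 1 else 0 := by
  have hpow : (∃ r, 1 ≤ r ∧ n = 2 ^ r - 1) ↔ ∃ r, n + 1 = 2 ^ r := by
    constructor
    · rintro ⟨r, -, hr⟩
      exact ⟨r, by omega⟩
    · rintro ⟨_ | r, hr⟩
      · omega
      · exact ⟨r + 1, by omega, by omega⟩
  rw [coeff_zero_treePoly, if_congr hpow rfl rfl]
  split_ifs
  · simp [finsetSum_coeff, coeff_X_pow, Nat.lt_succ_of_le hc]
  · rw [coeff_zero]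

theorem natDegree_coeff_treePoly_le (n l : ℕ) : ((treePoly n).coeff l).natDegree ≤ n := by
  induction n using Nat.strong_induction_on generalizing l with
  | _ n ih =>
    cases n with
    | zero => simp [coeff_one, apply_ite natDegree]
    | succ n =>
      rw [coeff_treePoly_succ, add_comm n 1]
      have hfactor : (1 + X : ℚ[X]).natDegree ≤ 1 := by compute_degree
      refine natDegree_mul_le_of_le hfactor (natDegree_add_le_of_degree_le ?_ ?_)
      · split_ifs
        · refine (natDegree_C_mul_le _ _).trans ?_
          have hhalf := ih (n / 2) (by omega) (l / 2)
          rw [natDegree_expand]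
          omega
        · simp
      · refine (natDegree_C_mul_le _ _).trans ?_
        cases l with
        | zero => simp
        | succ l =>
          rw [coeff_X_mul, finsetSum_coeff]
          refine natDegree_sum_le_of_forall_le _ _ fun ij hij ↦ ?_
          rw [HasAntidiagonal.mem_antidiagonal] at hij
          rw [coeff_mul]
          refine natDegree_sum_le_of_forall_le _ _ fun vw _ ↦ ?_
          exact (natDegree_mul_le_of_le (ih _ (by omega) _) (ih _ (by omega) _)).trans hij.le

theorem coeff_coeff_treePoly_eq_zero {n c : ℕ} (l : ℕ) (hc : n < c) :
    ((treePoly n).coeff l).coeff c = 0 :=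
  coeff_eq_zero_of_natDegree_lt ((natDegree_coeff_treePoly_le n l).trans_lt hc)

theorem coeff_coeff_treePoly_succ_succ (n l c : ℕ) :
    ((treePoly (n + 1)).coeff (l + 1)).coeff c =
      (if Even n then
        (-1 / 2) ^ ((l + 1) % 2) * ((treePoly (n / 2)).coeff ((l + 1) / 2)).coeff (c / 2)
      else 0)
      + 1 / 2 * ∑ δ ∈ range 2, if δ ≤ c then
          ∑ ij ∈ antidiagonal n, ∑ vw ∈ antidiagonal l, ∑ ab ∈ antidiagonal (c - δ),
            ((treePoly ij.1).coeff vw.1).coeff ab.1 * ((treePoly ij.2).coeff vw.2).coeff ab.2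
        else 0 := by
  rw [coeff_treePoly_succ, coeff_X_mul, mul_add, coeff_add, mul_left_comm _ (C (1 / 2)),
    coeff_C_mul]
  congr 1
  · split_ifs
    · rw [mul_left_comm, coeff_C_mul, coeff_one_add_X_mul_expand_two]
    · rw [mul_zero, coeff_zero]
  · rw [coeff_one_add_X_mul]
    simp only [finsetSum_coeff, coeff_mul]

end TreePoly

section K3

theorem K3_succ_succ {n l c : ℕ} (hl : l + 1 < n) (hc : c ≤ n + 1) :
    K3 (n + 1) (l + 1) c =
      (if Even n then (-1 / 2) ^ ((l + 1) % 2) * K3 (n / 2) ((l + 1) / 2) (c / 2) else 0)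
      + 1 / 2 * ∑ δ ∈ range 2, if δ ≤ c then
          ∑ ij ∈ antidiagonal n, ∑ vw ∈ antidiagonal l, ∑ ab ∈ antidiagonal (c - δ),
            K3 ij.1 vw.1 ab.1 * K3 ij.2 vw.2 ab.2
        else 0 := by
  rw [K3, if_neg (by omega), if_neg (by omega), if_neg (by omega)]
  congr 1
  · obtain ⟨k, rfl | rfl⟩ := n.even_or_odd'
    · have hmod : (2 * k + 1) % 2 = 1 := by omega
      have hdiv : (2 * k + 1) / 2 = 2 * k / 2 := by omega
      rw [if_pos hmod, if_pos (even_two_mul k), hdiv]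
    · have hmod : ¬ (2 * k + 1 + 1) % 2 = 1 := by omega
      rw [if_neg hmod, if_neg (Nat.not_even_two_mul_add_one k)]
  · congr 1
    refine sum_congr rfl fun δ _ ↦ ?_
    simp only [Nat.sum_antidiagonal_eq_sum_range_succ_mk, Nat.add_sub_cancel]
    exact if_congr Iff.rfl (sum_attach (range (n + 1)) fun k ↦ ∑ v ∈ range (l + 1),
      ∑ m ∈ range (c - δ + 1), K3 k v m * K3 (n - k) (l - v) (c - δ - m)) rfl

theorem K3_eq_coeff_coeff_treePoly (n l c : ℕ) : K3 n l c = ((treePoly n).coeff l).coeff c := by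
  induction n using Nat.strong_induction_on generalizing l c with
  | _ n ih =>
    rcases n with _ | n
    · rw [K3, treePoly_zero, coeff_one]
      split_ifs <;> simp_all [coeff_one]
    rcases lt_or_ge (n + 1) c with hc | hc
    · rw [K3, if_pos (Or.inr hc), coeff_coeff_treePoly_eq_zero l hc]
    rcases lt_trichotomy l n with hl | rfl | hl
    · rcases l with _ | l
      · rw [K3, if_neg (by omega), if_neg hl.ne, if_pos rfl,
          coeff_coeff_zero_treePoly n.succ_pos hc]
      · rw [K3_succ_succ hl hc, coeff_coeff_treePoly_succ_succ, ih (n / 2) (by omega)]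
        congr 2
        refine sum_congr rfl fun δ _ ↦ if_congr Iff.rfl (sum_congr rfl fun ij hij ↦ ?_) rfl
        rw [HasAntidiagonal.mem_antidiagonal] at hij
        simp only [ih ij.1 (by omega), ih ij.2 (by omega)]
    · rw [K3, if_neg (by omega), if_pos rfl, coeff_treePoly_succ_self, coeff_one_add_X_pow]
    · rw [K3, if_pos (Or.inl (Nat.succ_le_of_lt hl)), coeff_treePoly_eq_zero n.succ_pos hl,
        coeff_zero]

end K3

section ColorPoly

/-- The generating polynomial `∑ B2 n c X ^ c` of row `n` of `B2`, defined as the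
specialization of `treePoly` at `Y = 1`; see `B2_eq_coeff_colorPoly`. -/
noncomputable def colorPoly (n : ℕ) : ℚ[X] := (treePoly n).eval 1

theorem colorPoly_zero : colorPoly 0 = 1 := by rw [colorPoly, treePoly_zero, eval_one]

theorem colorPoly_one : colorPoly 1 = 1 + X := by rw [colorPoly, treePoly_one, eval_C]

theorem colorPoly_succ (n : ℕ) :
    colorPoly (n + 1) = C (1 / 2) * ((1 + X) *
      ((∑ ij ∈ antidiagonal n, colorPoly ij.1 * colorPoly ij.2)
      + if Even n then expand ℚ 2 (colorPoly (n / 2)) else 0)) := by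
  have hhalf : (1 + C (-1 / 2) : ℚ[X]) = C (1 / 2) := by
    rw [← C_1, ← C_add]
    norm_num
  have hexpand (p : ℚ[X][Y]) :
      (expand ℚ[X] 2 (p.map (expand ℚ 2 : ℚ[X] →+* ℚ[X]))).eval 1 = expand ℚ 2 (p.eval 1) := by
    rw [expand_eval, one_pow, eval_one_map]
    rfl
  rw [colorPoly, treePoly_succ]
  split_ifs
  · simp only [eval_mul, eval_add, eval_C, eval_X, eval_one, eval_finsetSum, hexpand, mul_one,
      hhalf, one_mul, colorPoly]
    ring
  · simp only [eval_mul, eval_add, eval_C, eval_X, eval_zero, eval_finsetSum, one_mul, colorPoly]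
    ring

theorem coeff_colorPoly (n c : ℕ) :
    (colorPoly n).coeff c = ∑ l ∈ range (n + 1), ((treePoly n).coeff l).coeff c := by
  have hdegree : (treePoly n).natDegree < n + 1 := (natDegree_treePoly_le n).trans_lt (by omega)
  simp only [colorPoly, eval_eq_sum_range' hdegree, one_pow, mul_one, finsetSum_coeff]

theorem coeff_colorPoly_eq_zero {n c : ℕ} (hc : n < c) : (colorPoly n).coeff c = 0 := by
  rw [coeff_colorPoly]
  exact sum_eq_zero fun l _ ↦ coeff_coeff_treePoly_eq_zero l hc

theorem coeff_colorPoly_succ (n c : ℕ) :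
    (colorPoly (n + 1)).coeff c = 1 / 2 *
      ((∑ δ ∈ range 2, if δ ≤ c then
          ∑ ij ∈ antidiagonal n, ∑ ab ∈ antidiagonal (c - δ),
            (colorPoly ij.1).coeff ab.1 * (colorPoly ij.2).coeff ab.2
        else 0)
      + if Even n then (colorPoly (n / 2)).coeff (c / 2) else 0) := by
  rw [colorPoly_succ, coeff_C_mul, mul_add, coeff_add]
  congr 2
  · rw [coeff_one_add_X_mul]
    simp only [finsetSum_coeff, coeff_mul]
  · split_ifs
    · exact coeff_one_add_X_mul_expand_two _ c
    · rw [mul_zero, coeff_zero]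

end ColorPoly

section B2

theorem B_add_two (n : ℕ) :
    B (n + 2) = 1 / 2 * ((∑ ij ∈ antidiagonal (n + 1), B ij.1 * B ij.2)
      + if Even (n + 1) then B ((n + 1) / 2) else 0) := by
  rw [B, Nat.sum_antidiagonal_eq_sum_range_succ_mk,
    sum_attach (range (n + 2)) fun k ↦ B (n + 1 - k) * B k]
  simp only [mul_comm, ← Nat.even_iff, Nat.even_add_one (n := n + 1), ite_not]

theorem B_eq_coeff_zero_colorPoly (n : ℕ) : B n = (colorPoly n).coeff 0 := by
  induction n using Nat.strong_induction_on with
  | _ n ih =>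
    match n with
    | 0 => simp [B, colorPoly_zero]
    | 1 => simp [B, colorPoly_one]
    | n + 2 =>
      rw [B_add_two, coeff_colorPoly_succ, ih ((n + 1) / 2) (by omega), sum_range_succ,
        sum_range_one, if_pos le_rfl, if_neg Nat.one_pos.not_ge, add_zero]
      simp only [Nat.sub_zero, Nat.zero_div, Nat.antidiagonal_zero, sum_singleton]
      congr 2
      refine sum_congr rfl fun ij hij ↦ ?_
      rw [HasAntidiagonal.mem_antidiagonal] at hij
      rw [ih ij.1 (by omega), ih ij.2 (by omega)]

theorem B2_add_two {n c : ℕ} (hc₀ : c ≠ 0) (hc : c ≤ n + 2) :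
    B2 (n + 2) c = 1 / 2 *
      ((∑ δ ∈ range 2, if δ ≤ c then
          ∑ ij ∈ antidiagonal (n + 1), ∑ ab ∈ antidiagonal (c - δ),
            B2 ij.1 ab.1 * B2 ij.2 ab.2
        else 0)
      + if Even (n + 1) then B2 ((n + 1) / 2) (c / 2) else 0) := by
  rw [B2, if_neg hc₀, if_neg hc.not_gt]
  simp only [← Nat.even_iff, Nat.even_add_one (n := n + 1), ite_not]
  congr 2
  refine sum_congr rfl fun δ hδ ↦ ?_
  rw [mem_range] at hδ
  rw [if_pos (by omega)]
  simp only [Nat.sum_antidiagonal_eq_sum_range_succ_mk]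
  exact sum_attach (range (n + 2)) fun l ↦
    ∑ m ∈ range (c - δ + 1), B2 l m * B2 (n + 1 - l) (c - δ - m)

theorem B2_eq_coeff_colorPoly (n c : ℕ) : B2 n c = (colorPoly n).coeff c := by
  induction n using Nat.strong_induction_on generalizing c with
  | _ n ih =>
    match n with
    | 0 => rw [B2, colorPoly_zero, coeff_one]
    | 1 =>
      rw [B2, colorPoly_one, coeff_add, coeff_one, coeff_X]
      rcases c with _ | _ | c <;> simp
    | n + 2 =>
      rcases eq_or_ne c 0 with rfl | hc₀
      · rw [B2, if_pos rfl, B_eq_coeff_zero_colorPoly]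
      rcases lt_or_ge (n + 2) c with hc | hc
      · rw [B2, if_neg hc₀, if_pos hc, coeff_colorPoly_eq_zero hc]
      rw [B2_add_two hc₀ hc, coeff_colorPoly_succ, ih ((n + 1) / 2) (by omega)]
      congr 2
      refine sum_congr rfl fun δ _ ↦ if_congr Iff.rfl (sum_congr rfl fun ij hij ↦ ?_) rfl
      rw [HasAntidiagonal.mem_antidiagonal] at hij
      simp only [ih ij.1 (by omega), ih ij.2 (by omega)]

end B2

/-- For all natural numbers `n` and `c`, `∑_{ℓ=0}^{n} K3 n ℓ c = B2 n c`. -/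
theorem sum_K3_eq_B2 (n c : ℕ) : ∑ ℓ ∈ Finset.range (n + 1), K3 n ℓ c = B2 n c := by
  calc ∑ ℓ ∈ range (n + 1), K3 n ℓ c
      = ∑ ℓ ∈ range (n + 1), ((treePoly n).coeff ℓ).coeff c := by
        simp only [K3_eq_coeff_coeff_treePoly]
    _ = (colorPoly n).coeff c := (coeff_colorPoly n c).symm
    _ = B2 n c := (B2_eq_coeff_colorPoly n c).symm
end
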